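/- Yukawa fundamental solution: let κ ∈ ℂ with Re κ > 0 and let f : ℝ³ → ℂ be a Schwartz function. Then the convolution u(x) = ∫_{ℝ³} (e^{−κ|x−y|}/(4π|x−y|)) f(y) dy is well defined, u is twice continuously differentiable, and u satisfies −Δu(x) + κ²u(x) = f(x) for all x ∈ ℝ³. -/

import Mathlib

open MeasureTheory Complex Filter
open scoped Topology Real

noncomputable section

/-- Euclidean space `ℝ³`. -/
abbrev E3 := EuclideanSpace ℝ (Fin 3)

/-- The `i`-th standard basis vector of `ℝ³`. -/
def e3 (i : Fin 3) : E3 := EuclideanSpace.single i 1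

/-- The Laplacian `Δu(x) = Σᵢ ∂ᵢ∂ᵢ u(x)` of a function `u : ℝ³ → ℂ`. -/
def lapC (u : E3 → ℂ) (x : E3) : ℂ :=
  ∑ i, fderiv ℝ (fun y => fderiv ℝ u y (e3 i)) x (e3 i)

/-- The Yukawa potential `u(x) = ∫ e^{−κ|x−y|}/(4π|x−y|) f(y) dy`. -/
def yukawa (κ : ℂ) (f : E3 → ℂ) (x : E3) : ℂ :=
  ∫ y : E3, Complex.exp (-κ * (‖x - y‖ : ℝ)) / (4 * (π : ℂ) * (‖x - y‖ : ℝ)) * f y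

open scoped LineDeriv

def GK (κ : ℂ) (z : E3) : ℂ :=
  Complex.exp (-κ * (‖z‖ : ℝ)) / (4 * (π : ℂ) * (‖z‖ : ℝ))

lemma norm_GK (κ : ℂ) (z : E3) : ‖GK κ z‖ = Real.exp (-κ.re * ‖z‖) / (4 * π * ‖z‖) := by
  unfold GK
  rw [norm_div, Complex.norm_exp]
  simp [abs_of_pos Real.pi_pos]

lemma GK_measurable (κ : ℂ) : Measurable (GK κ) := by
  unfold GK
  fun_prop

lemma GK_integrable (κ : ℂ) (hκ : 0 < κ.re) : Integrable (GK κ) := by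
  have h : Integrable (fun z : E3 => Real.exp (-κ.re * ‖z‖) / (4 * π * ‖z‖)) := by
    rw [integrable_fun_norm_addHaar (volume : Measure E3)
      (f := fun r => Real.exp (-κ.re * r) / (4 * π * r))]
    have h1 := (Real.GammaIntegral_convergent (s := 2) (by norm_num))
    have h2 : IntegrableOn (fun y : ℝ => y * Real.exp (-κ.re * y)) (Set.Ioi 0) := by
      have := integrableOn_rpow_mul_exp_neg_mul_rpow (s := 1) (p := 1) (b := κ.re)
        (by norm_num) (by norm_num) hκ
      simpa using this
    refine (integrableOn_congr_fun ?_ measurableSet_Ioi).mpr (h2.const_mul (1 / (4 * π)))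
    intro y hy
    have hy' : (y : ℝ) ≠ 0 := ne_of_gt hy
    simp only [finrank_euclideanSpace, Fintype.card_fin, smul_eq_mul]
    field_simp
  refine h.mono' (GK_measurable κ).aestronglyMeasurable ?_
  exact Eventually.of_forall fun z => (norm_GK κ z).le

def UU {F : Type} [NormedAddCommGroup F] [NormedSpace ℝ F] [NormedSpace ℂ F]
    (κ : ℂ) (g : E3 → F) (x : E3) : F := ∫ w : E3, GK κ w • g (x + w)

section
variable {F : Type} [NormedAddCommGroup F] [NormedSpace ℝ F] [NormedSpace ℂ F]
  [IsScalarTower ℝ ℂ F] [SMulCommClass ℝ ℂ F]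

lemma UU_integrable (κ : ℂ) (hκ : 0 < κ.re) (g : SchwartzMap E3 F) (x : E3) :
    Integrable (fun w => GK κ w • g (x + w)) := by
  obtain ⟨C, hC⟩ : ∃ C, ∀ x, ‖g x‖ ≤ C :=
    ⟨_, fun x => by simpa using SchwartzMap.norm_le_seminorm ℝ g x⟩
  refine ((GK_integrable κ hκ).norm.mul_const C).mono' ?_ ?_
  · exact (GK_measurable κ).aestronglyMeasurable.smul
      (g.continuous.comp (by fun_prop : Continuous fun w => x + w)).aestronglyMeasurable
  · refine Eventually.of_forall fun w => ?_
    rw [norm_smul]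
    exact mul_le_mul_of_nonneg_left (hC _) (norm_nonneg _)

lemma UU_hasFDerivAt (κ : ℂ) (hκ : 0 < κ.re) (g : SchwartzMap E3 F) (x : E3) :
    HasFDerivAt (UU κ g) (UU κ (SchwartzMap.fderivCLM ℝ E3 F g) x) x := by
  set g' := SchwartzMap.fderivCLM ℝ E3 F g with hg'
  obtain ⟨C, hC⟩ : ∃ C, ∀ x, ‖g' x‖ ≤ C :=
    ⟨_, fun x => by simpa using SchwartzMap.norm_le_seminorm ℝ g' x⟩
  refine hasFDerivAt_integral_of_dominated_of_fderiv_le (s := Set.univ)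
    (F := fun x w => GK κ w • g (x + w)) (F' := fun x w => GK κ w • g' (x + w))
    (bound := fun w => ‖GK κ w‖ * C) Filter.univ_mem ?_ (UU_integrable κ hκ g x)
    (UU_integrable κ hκ g' x).aestronglyMeasurable ?_ 
    ((GK_integrable κ hκ).norm.mul_const C) ?_
  · exact Eventually.of_forall fun y => (UU_integrable κ hκ g y).aestronglyMeasurable
  · refine Eventually.of_forall fun w y _ => ?_
    rw [norm_smul]
    exact mul_le_mul_of_nonneg_left (hC _) (norm_nonneg _)
  · refine Eventually.of_forall fun w y _ => ?_
    refine HasFDerivAt.const_smul ?_ (GK κ w)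
    have h := (g.differentiableAt (x := y + w)).hasFDerivAt
    exact (hasFDerivAt_comp_add_right w).mpr h

end

lemma UU_contDiff (κ : ℂ) (hκ : 0 < κ.re) (n : ℕ) : ∀ {F : Type} [NormedAddCommGroup F]
    [NormedSpace ℝ F] [NormedSpace ℂ F] [IsScalarTower ℝ ℂ F] [SMulCommClass ℝ ℂ F]
    (g : SchwartzMap E3 F), ContDiff ℝ n (UU κ g) := by
  induction n with
  | zero =>
    intro F _ _ _ _ _ g
    refine contDiff_zero.mpr (continuous_iff_continuousAt.mpr fun x => ?_)
    exact (UU_hasFDerivAt κ hκ g x).continuousAt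
  | succ n ih =>
    intro F _ _ _ _ _ g
    have := contDiff_succ_iff_hasFDerivAt (𝕜 := ℝ) (n := n) (f := UU κ g)
    push_cast
    exact this.mpr ⟨_, ih (SchwartzMap.fderivCLM ℝ E3 F g), UU_hasFDerivAt κ hκ g⟩

lemma UU_fderiv (κ : ℂ) (hκ : 0 < κ.re) (g : SchwartzMap E3 ℂ) (x v : E3) :
    fderiv ℝ (UU κ g) x v = UU κ (∂_{v} g : SchwartzMap E3 ℂ) x := by
  rw [(UU_hasFDerivAt κ hκ g x).fderiv]
  unfold UU
  rw [ContinuousLinearMap.integral_apply (UU_integrable κ hκ _ x)]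
  rfl

lemma yukawa_integrand (κ : ℂ) (f : E3 → ℂ) (x y : E3) :
    Complex.exp (-κ * (‖x - y‖ : ℝ)) / (4 * (π : ℂ) * (‖x - y‖ : ℝ)) * f y
      = (fun w => GK κ w • f (x + w)) (y - x) := by
  simp only [GK, smul_eq_mul, norm_sub_rev x y]
  congr 2
  abel

lemma yukawa_eq (κ : ℂ) (f : E3 → ℂ) : yukawa κ f = UU κ f := by
  funext x
  unfold yukawa UU
  simp_rw [yukawa_integrand]
  exact integral_sub_right_eq_self (fun w => GK κ w • f (x + w)) x

def EE (κ : ℂ) (ρ : ℝ) : ℂ := Complex.exp (-κ * (ρ : ℂ)) / (4 * (π : ℂ))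
def Af (κ : ℂ) (ρ : ℝ) : ℂ := EE κ ρ * (1 / (ρ : ℂ))
def Bf (κ : ℂ) (ρ : ℝ) : ℂ := -(EE κ ρ * (κ / (ρ : ℂ) ^ 2 + 1 / (ρ : ℂ) ^ 3))
def Cf (κ : ℂ) (ρ : ℝ) : ℂ :=
  EE κ ρ * (κ ^ 2 / (ρ : ℂ) ^ 3 + 3 * κ / (ρ : ℂ) ^ 4 + 3 / (ρ : ℂ) ^ 5)

lemma EE_deriv (κ : ℂ) (ρ : ℝ) : HasDerivAt (EE κ) (-κ * EE κ ρ) ρ := by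
  have h : HasDerivAt (fun z : ℂ => Complex.exp (-κ * z) / (4 * (π : ℂ)))
      (-κ * (Complex.exp (-κ * (ρ : ℂ)) / (4 * (π : ℂ)))) (ρ : ℂ) := by
    have := (((hasDerivAt_id (ρ : ℂ)).const_mul (-κ)).cexp).div_const (4 * (π : ℂ))
    refine this.congr_deriv ?_
    simp only [id]
    ring
  exact h.comp_ofReal

lemma inv_pow_deriv (n : ℕ) (ρ : ℝ) (hρ : ρ ≠ 0) :
    HasDerivAt (fun r : ℝ => 1 / (r : ℂ) ^ n) (-(n : ℂ) / (ρ : ℂ) ^ (n + 1)) ρ := by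
  have hc : (ρ : ℂ) ≠ 0 := by exact_mod_cast hρ
  have h : HasDerivAt (fun z : ℂ => 1 / z ^ n) (-(n : ℂ) / (ρ : ℂ) ^ (n + 1)) (ρ : ℂ) := by
    have := (hasDerivAt_pow n (ρ : ℂ)).fun_inv (pow_ne_zero n hc)
    simp only [one_div]
    refine this.congr_deriv ?_
    rcases n with _ | n
    · simp
    · simp only [Nat.add_sub_cancel]
      field_simp
      ring
  exact h.comp_ofReal

lemma Af_deriv (κ : ℂ) (ρ : ℝ) (hρ : ρ ≠ 0) : HasDerivAt (Af κ) ((ρ : ℂ) * Bf κ ρ) ρ := by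
  have hc : (ρ : ℂ) ≠ 0 := by exact_mod_cast hρ
  have h := (EE_deriv κ ρ).mul (inv_pow_deriv 1 ρ hρ)
  simp only [pow_one] at h
  refine HasDerivAt.congr_deriv (f := Af κ) h ?_
  unfold Bf
  push_cast
  field_simp
  ring

lemma Bf_deriv (κ : ℂ) (ρ : ℝ) (hρ : ρ ≠ 0) : HasDerivAt (Bf κ) ((ρ : ℂ) * Cf κ ρ) ρ := by
  have hc : (ρ : ℂ) ≠ 0 := by exact_mod_cast hρ
  have h := ((EE_deriv κ ρ).mul (((inv_pow_deriv 2 ρ hρ).const_mul κ).add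
    (inv_pow_deriv 3 ρ hρ))).neg
  have e : Bf κ = -(EE κ * ((fun y : ℝ => κ * (1 / (y : ℂ) ^ 2)) + fun r : ℝ => 1 / (r : ℂ) ^ 3)) := by
    funext y
    simp only [Bf, Pi.neg_apply, Pi.mul_apply, Pi.add_apply]
    ring
  rw [e]
  refine h.congr_deriv ?_
  unfold Cf
  simp only [Pi.add_apply]
  push_cast
  field_simp
  ring

lemma EE_norm (κ : ℂ) (ρ : ℝ) : ‖EE κ ρ‖ = Real.exp (-(κ.re * ρ)) / (4 * π) := by
  unfold EE
  rw [norm_div, Complex.norm_exp]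
  simp [abs_of_pos Real.pi_pos]

lemma EE_norm_le (κ : ℂ) (hκ : 0 < κ.re) (ρ : ℝ) (hρ : 0 ≤ ρ) : ‖EE κ ρ‖ ≤ 1 := by
  rw [EE_norm, div_le_one (by positivity)]
  have h1 : Real.exp (-(κ.re * ρ)) ≤ 1 := by
    rw [Real.exp_le_one_iff]
    have := mul_nonneg hκ.le hρ
    linarith
  have := Real.pi_gt_three
  linarith

lemma Af_bound (κ : ℂ) (hκ : 0 < κ.re) (ε ρ : ℝ) (hε : 0 < ε) (hρ : ε ≤ ρ) :
    ‖Af κ ρ‖ ≤ 1 / ε := by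
  have hρ0 : 0 < ρ := hε.trans_le hρ
  unfold Af
  rw [norm_mul]
  have h := EE_norm_le κ hκ ρ hρ0.le
  have : ‖(1 / (ρ : ℂ))‖ ≤ 1 / ε := by
    rw [norm_div, norm_one, Complex.norm_real, Real.norm_of_nonneg hρ0.le]
    gcongr
  calc _ ≤ 1 * (1 / ε) := by gcongr
    _ = _ := one_mul _

lemma Bf_bound (κ : ℂ) (hκ : 0 < κ.re) (ε ρ : ℝ) (hε : 0 < ε) (hρ : ε ≤ ρ) :
    ‖Bf κ ρ‖ ≤ (‖κ‖ / ε + 1 / ε ^ 2) / ρ := by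
  have hρ0 : 0 < ρ := hε.trans_le hρ
  unfold Bf
  rw [norm_neg, norm_mul]
  have h := EE_norm_le κ hκ ρ hρ0.le
  have : ‖(κ / (ρ : ℂ) ^ 2 + 1 / (ρ : ℂ) ^ 3)‖ ≤ (‖κ‖ / ε + 1 / ε ^ 2) / ρ := by
    calc _ ≤ ‖κ / (ρ : ℂ) ^ 2‖ + ‖1 / (ρ : ℂ) ^ 3‖ := norm_add_le _ _
      _ = (‖κ‖ / ρ + 1 / ρ ^ 2) / ρ := by
        simp only [norm_div, norm_one, norm_pow, Complex.norm_real, Real.norm_of_nonneg hρ0.le]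
        field_simp
      _ ≤ _ := by gcongr
  calc _ ≤ 1 * ((‖κ‖ / ε + 1 / ε ^ 2) / ρ) := by gcongr
    _ = _ := one_mul _

lemma Cf_bound (κ : ℂ) (hκ : 0 < κ.re) (ε ρ : ℝ) (hε : 0 < ε) (hρ : ε ≤ ρ) :
    ‖Cf κ ρ‖ ≤ (‖κ‖ ^ 2 / ε + 3 * ‖κ‖ / ε ^ 2 + 3 / ε ^ 3) / ρ ^ 2 := by
  have hρ0 : 0 < ρ := hε.trans_le hρ
  unfold Cf
  rw [norm_mul]
  have h := EE_norm_le κ hκ ρ hρ0.le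
  have : ‖(κ ^ 2 / (ρ : ℂ) ^ 3 + 3 * κ / (ρ : ℂ) ^ 4 + 3 / (ρ : ℂ) ^ 5)‖ ≤
      (‖κ‖ ^ 2 / ε + 3 * ‖κ‖ / ε ^ 2 + 3 / ε ^ 3) / ρ ^ 2 := by
    calc _ ≤ ‖κ ^ 2 / (ρ : ℂ) ^ 3‖ + ‖3 * κ / (ρ : ℂ) ^ 4‖ + ‖3 / (ρ : ℂ) ^ 5‖ := norm_add₃_le
      _ = (‖κ‖ ^ 2 / ρ + 3 * ‖κ‖ / ρ ^ 2 + 3 / ρ ^ 3) / ρ ^ 2 := by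
        simp only [norm_div, norm_mul, norm_pow, Complex.norm_real, Real.norm_of_nonneg hρ0.le,
          RCLike.norm_ofNat]
        field_simp
      _ ≤ _ := by gcongr
  calc _ ≤ 1 * ((‖κ‖ ^ 2 / ε + 3 * ‖κ‖ / ε ^ 2 + 3 / ε ^ 3) / ρ ^ 2) := by gcongr
    _ = _ := one_mul _

def rho (ε : ℝ) (z : E3) : ℝ := √(‖z‖ ^ 2 + ε ^ 2)

lemma rho_sq (ε : ℝ) (z : E3) : rho ε z ^ 2 = ‖z‖ ^ 2 + ε ^ 2 :=
  Real.sq_sqrt (by positivity)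

lemma rho_ge (ε : ℝ) (hε : 0 < ε) (z : E3) : ε ≤ rho ε z :=
  Real.le_sqrt_of_sq_le (by nlinarith [sq_nonneg ‖z‖])

lemma rho_ge' (ε : ℝ) (z : E3) : ‖z‖ ≤ rho ε z :=
  Real.le_sqrt_of_sq_le (by nlinarith [sq_nonneg ε])

lemma rho_pos (ε : ℝ) (hε : 0 < ε) (z : E3) : 0 < rho ε z := hε.trans_le (rho_ge ε hε z)

lemma rho_deriv (ε : ℝ) (hε : 0 < ε) (z : E3) :
    HasFDerivAt (rho ε) ((rho ε z)⁻¹ • innerSL ℝ z) z := by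
  have h := ((hasStrictFDerivAt_norm_sq z).hasFDerivAt.add_const (ε ^ 2)).sqrt (by positivity)
  refine h.congr_fderiv ?_
  ext v
  simp only [rho, ContinuousLinearMap.smul_apply, smul_eq_mul, nsmul_eq_mul,
    innerSL_apply_apply]
  simp
  ring

lemma comp_rho_deriv (ε : ℝ) (hε : 0 < ε) (h : ℝ → ℂ) (h' : ℂ) (z : E3)
    (hd : HasDerivAt h ((rho ε z : ℂ) * h') (rho ε z)) :
    HasFDerivAt (fun z => h (rho ε z)) ((innerSL ℝ z).smulRight h') z := by
  have := hd.hasFDerivAt.comp z (rho_deriv ε hε z)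
  refine this.congr_fderiv ?_
  have hc : (rho ε z : ℂ) ≠ 0 := by exact_mod_cast (rho_pos ε hε z).ne'
  ext v
  simp
  field_simp

lemma A_fderiv (κ : ℂ) (ε : ℝ) (hε : 0 < ε) (z : E3) :
    HasFDerivAt (fun z => Af κ (rho ε z)) ((innerSL ℝ z).smulRight (Bf κ (rho ε z))) z :=
  comp_rho_deriv ε hε _ _ z (Af_deriv κ _ (rho_pos ε hε z).ne')

lemma B_fderiv (κ : ℂ) (ε : ℝ) (hε : 0 < ε) (z : E3) :
    HasFDerivAt (fun z => Bf κ (rho ε z)) ((innerSL ℝ z).smulRight (Cf κ (rho ε z))) z :=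
  comp_rho_deriv ε hε _ _ z (Bf_deriv κ _ (rho_pos ε hε z).ne')

lemma coord_fderiv (i : Fin 3) (z : E3) :
    HasFDerivAt (fun z : E3 => ((z i : ℝ) : ℂ))
      (Complex.ofRealCLM ∘L (EuclideanSpace.proj i : E3 →L[ℝ] ℝ)) z :=
  (Complex.ofRealCLM ∘L (EuclideanSpace.proj i : E3 →L[ℝ] ℝ)).hasFDerivAt

lemma inner_e3 (i : Fin 3) (z : E3) : innerSL ℝ z (e3 i) = z i := by
  simp [e3, EuclideanSpace.inner_single_right]

lemma A_fderiv_e (κ : ℂ) (ε : ℝ) (hε : 0 < ε) (z : E3) (i : Fin 3) :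
    fderiv ℝ (fun z => Af κ (rho ε z)) z (e3 i) = (z i : ℂ) * Bf κ (rho ε z) := by
  rw [(A_fderiv κ ε hε z).fderiv, ContinuousLinearMap.smulRight_apply, inner_e3]
  simp

lemma zB_fderiv_e (κ : ℂ) (ε : ℝ) (hε : 0 < ε) (z : E3) (i : Fin 3) :
    fderiv ℝ (fun z : E3 => (z i : ℂ) * Bf κ (rho ε z)) z (e3 i)
      = Bf κ (rho ε z) + (z i : ℂ) ^ 2 * Cf κ (rho ε z) := by
  rw [((coord_fderiv i z).fun_mul (B_fderiv κ ε hε z)).fderiv]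
  simp only [ContinuousLinearMap.add_apply, ContinuousLinearMap.smul_apply,
    ContinuousLinearMap.smulRight_apply, inner_e3]
  simp [e3]
  ring

lemma Cf_cont (κ : ℂ) (ρ : ℝ) (hρ : ρ ≠ 0) : ContinuousAt (Cf κ) ρ := by
  have hc : (ρ : ℂ) ≠ 0 := by exact_mod_cast hρ
  unfold Cf EE
  have h : ContinuousAt (fun r : ℝ => (r : ℂ)) ρ := Complex.continuous_ofReal.continuousAt
  fun_prop (disch := simp [hρ])

lemma rho_cont (ε : ℝ) : Continuous (rho ε) := by
  unfold rho
  fun_prop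

lemma C_cont (κ : ℂ) (ε : ℝ) (hε : 0 < ε) : Continuous fun z => Cf κ (rho ε z) :=
  continuous_iff_continuousAt.mpr fun z =>
    (Cf_cont κ _ (rho_pos ε hε z).ne').comp (f := rho ε) (rho_cont ε).continuousAt
lemma A_cont (κ : ℂ) (ε : ℝ) (hε : 0 < ε) : Continuous fun z => Af κ (rho ε z) :=
  continuous_iff_continuousAt.mpr fun z => (A_fderiv κ ε hε z).continuousAt
lemma B_cont (κ : ℂ) (ε : ℝ) (hε : 0 < ε) : Continuous fun z => Bf κ (rho ε z) :=
  continuous_iff_continuousAt.mpr fun z => (B_fderiv κ ε hε z).continuousAt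

lemma coord_le (ε : ℝ) (z : E3) (i : Fin 3) : ‖(z i : ℂ)‖ ≤ rho ε z := by
  rw [Complex.norm_real]
  exact (PiLp.norm_apply_le z i).trans (rho_ge' ε z)

lemma zB_bound (κ : ℂ) (hκ : 0 < κ.re) (ε : ℝ) (hε : 0 < ε) (i : Fin 3) (z : E3) :
    ‖(z i : ℂ) * Bf κ (rho ε z)‖ ≤ ‖κ‖ / ε + 1 / ε ^ 2 := by
  have hp := rho_pos ε hε z
  rw [norm_mul]
  calc _ ≤ rho ε z * ((‖κ‖ / ε + 1 / ε ^ 2) / rho ε z) := by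
        gcongr
        · exact coord_le ε z i
        · exact Bf_bound κ hκ ε _ hε (rho_ge ε hε z)
    _ = _ := by field_simp

lemma zzC_bound (κ : ℂ) (hκ : 0 < κ.re) (ε : ℝ) (hε : 0 < ε) (i : Fin 3) (z : E3) :
    ‖Bf κ (rho ε z) + (z i : ℂ) ^ 2 * Cf κ (rho ε z)‖ ≤
      (‖κ‖ / ε + 1 / ε ^ 2) / ε + (‖κ‖ ^ 2 / ε + 3 * ‖κ‖ / ε ^ 2 + 3 / ε ^ 3) := by
  have hp := rho_pos ε hε z
  refine (norm_add_le _ _).trans (add_le_add ?_ ?_)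
  · refine (Bf_bound κ hκ ε _ hε (rho_ge ε hε z)).trans ?_
    gcongr
    exact rho_ge ε hε z
  · rw [norm_mul, norm_pow]
    calc _ ≤ rho ε z ^ 2 * ((‖κ‖ ^ 2 / ε + 3 * ‖κ‖ / ε ^ 2 + 3 / ε ^ 3) / rho ε z ^ 2) := by
          gcongr
          · exact coord_le ε z i
          · exact Cf_bound κ hκ ε _ hε (rho_ge ε hε z)
      _ = _ := by field_simp

lemma bdd_mul_integrable (a : E3 → ℂ) (ha : Continuous a) (C : ℝ) (hC : ∀ z, ‖a z‖ ≤ C)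
    (φ : SchwartzMap E3 ℂ) : Integrable (fun z => a z * φ z) :=
  φ.integrable.bdd_mul ha.aestronglyMeasurable (Eventually.of_forall hC)

lemma ibp (κ : ℂ) (hκ : 0 < κ.re) (ε : ℝ) (hε : 0 < ε) (φ : SchwartzMap E3 ℂ) (i : Fin 3) :
    ∫ z : E3, Af κ (rho ε z) * (∂_{e3 i} (∂_{e3 i} φ : SchwartzMap E3 ℂ) : SchwartzMap E3 ℂ) z
      = ∫ z : E3, (Bf κ (rho ε z) + (z i : ℂ) ^ 2 * Cf κ (rho ε z)) * φ z := by
  have cc : Continuous fun z : E3 => ((z i : ℝ) : ℂ) := by fun_prop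
  have iA := fun φ => bdd_mul_integrable _ (A_cont κ ε hε) _
    (fun z => Af_bound κ hκ ε _ hε (rho_ge ε hε z)) φ
  have iB := fun φ => bdd_mul_integrable _ (cc.mul (B_cont κ ε hε)) _
    (fun z => zB_bound κ hκ ε hε i z) φ
  have iC := fun φ => bdd_mul_integrable _
    ((B_cont κ ε hε).add ((cc.pow 2).mul (C_cont κ ε hε))) _
    (fun z => zzC_bound κ hκ ε hε i z) φ
  have h1 := integral_mul_fderiv_eq_neg_fderiv_mul_of_integrable (μ := (volume : Measure E3))
    (f := fun z => Af κ (rho ε z)) (g := (∂_{e3 i} φ : SchwartzMap E3 ℂ)) (v := e3 i)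
    (by simp only [A_fderiv_e κ ε hε]; exact iB _)
    (iA (∂_{e3 i} (∂_{e3 i} φ : SchwartzMap E3 ℂ))) (iA _)
    (fun z _ => (A_fderiv κ ε hε z).differentiableAt)
    (fun z _ => (∂_{e3 i} φ : SchwartzMap E3 ℂ).differentiableAt)
  have h2 := integral_mul_fderiv_eq_neg_fderiv_mul_of_integrable (μ := (volume : Measure E3))
    (f := fun z : E3 => (z i : ℂ) * Bf κ (rho ε z)) (g := φ) (v := e3 i)
    (by simp only [zB_fderiv_e κ ε hε]; exact iC _)
    (iB (∂_{e3 i} φ : SchwartzMap E3 ℂ)) (iB _)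
    (fun z _ => ((coord_fderiv i z).mul (B_fderiv κ ε hε z)).differentiableAt)
    (fun z _ => φ.differentiableAt)
  simp only [A_fderiv_e κ ε hε] at h1
  simp only [zB_fderiv_e κ ε hε] at h2
  simp only [SchwartzMap.lineDerivOp_apply_eq_fderiv] at h1 ⊢
  rw [h1, h2, neg_neg]

lemma ABC (κ : ℂ) (ε : ℝ) (hε : 0 < ε) (z : E3) :
    κ ^ 2 * Af κ (rho ε z) - ∑ i : Fin 3, (Bf κ (rho ε z) + (z i : ℂ) ^ 2 * Cf κ (rho ε z))
      = (ε : ℂ) ^ 2 * Cf κ (rho ε z) := by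
  have hc : (rho ε z : ℂ) ≠ 0 := by exact_mod_cast (rho_pos ε hε z).ne'
  have h1 : ∑ i : Fin 3, (z i : ℂ) ^ 2 = (rho ε z : ℂ) ^ 2 - (ε : ℂ) ^ 2 := by
    have := rho_sq ε z
    rw [EuclideanSpace.norm_sq_eq] at this
    simp only [Real.norm_eq_abs, sq_abs] at this
    rw [eq_sub_iff_add_eq]
    exact_mod_cast this.symm
  rw [Finset.sum_add_distrib, ← Finset.sum_mul, h1]
  simp only [Finset.sum_const, Finset.card_univ, Fintype.card_fin, nsmul_eq_mul]
  unfold Af Bf Cf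
  generalize (rho ε z : ℂ) = r at *
  push_cast
  field_simp
  ring

lemma green_eps (κ : ℂ) (hκ : 0 < κ.re) (ε : ℝ) (hε : 0 < ε) (φ : SchwartzMap E3 ℂ) :
    ∫ z : E3, Af κ (rho ε z) * (κ ^ 2 * φ z -
        ∑ i, (∂_{e3 i} (∂_{e3 i} φ : SchwartzMap E3 ℂ) : SchwartzMap E3 ℂ) z)
      = ∫ z : E3, (ε : ℂ) ^ 2 * Cf κ (rho ε z) * φ z := by
  have cc : ∀ i, Continuous fun z : E3 => ((z i : ℝ) : ℂ) := fun i => by fun_prop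
  have iA := fun φ => bdd_mul_integrable _ (A_cont κ ε hε) _
    (fun z => Af_bound κ hκ ε _ hε (rho_ge ε hε z)) φ
  have iC : ∀ i : Fin 3, Integrable fun z : E3 =>
      (Bf κ (rho ε z) + (z i : ℂ) ^ 2 * Cf κ (rho ε z)) * φ z := fun i => bdd_mul_integrable _
    ((B_cont κ ε hε).add (((cc i).pow 2).mul (C_cont κ ε hε))) _
    (fun z => zzC_bound κ hκ ε hε i z) φ
  have e1 : ∀ z : E3, Af κ (rho ε z) * (κ ^ 2 * φ z -
        ∑ i, (∂_{e3 i} (∂_{e3 i} φ : SchwartzMap E3 ℂ) : SchwartzMap E3 ℂ) z)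
      = κ ^ 2 * (Af κ (rho ε z) * φ z) - ∑ i, Af κ (rho ε z) *
        (∂_{e3 i} (∂_{e3 i} φ : SchwartzMap E3 ℂ) : SchwartzMap E3 ℂ) z := by
    intro z
    rw [← Finset.mul_sum]
    ring
  have e2 : ∀ z : E3, (ε : ℂ) ^ 2 * Cf κ (rho ε z) * φ z = κ ^ 2 * (Af κ (rho ε z) * φ z)
      - ∑ i, (Bf κ (rho ε z) + (z i : ℂ) ^ 2 * Cf κ (rho ε z)) * φ z := by
    intro z
    rw [← ABC κ ε hε z, ← Finset.sum_mul]
    ring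
  simp_rw [e1, e2]
  rw [integral_sub ((iA φ).const_mul _) (integrable_finsetSum _ fun i _ => iA _),
    integral_sub ((iA φ).const_mul _) (integrable_finsetSum _ fun i _ => iC i),
    integral_finsetSum _ fun i _ => iA _, integral_finsetSum _ fun i _ => iC i]
  simp_rw [ibp κ hκ ε hε φ]

lemma Af_norm_le (κ : ℂ) (hκ : 0 < κ.re) (ε : ℝ) (z : E3) (hz : z ≠ 0) :
    ‖Af κ (rho ε z)‖ ≤ ‖GK κ z‖ := by
  have hz' : 0 < ‖z‖ := norm_pos_iff.mpr hz
  have h1 := rho_ge' ε z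
  have h2 : 0 < rho ε z := hz'.trans_le h1
  rw [norm_GK, Af, norm_mul, EE_norm, norm_div, norm_one, Complex.norm_real,
    Real.norm_of_nonneg h2.le, div_mul_div_comm, mul_one]
  gcongr
  nlinarith

lemma rho_tendsto (z : E3) : Tendsto (fun ε : ℝ => rho ε z) (𝓝[>] 0) (𝓝 ‖z‖) := by
  have : Continuous fun ε : ℝ => rho ε z := by
    unfold rho
    fun_prop
  have h := this.tendsto 0
  have e : rho 0 z = ‖z‖ := by simp [rho]
  rw [e] at h
  exact h.mono_left nhdsWithin_le_nhds

lemma ae_ne_zero : ∀ᵐ z : E3, z ≠ 0 := by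
  have : (volume : Measure E3) {(0 : E3)} = 0 := measure_singleton 0
  exact compl_mem_ae_iff.mpr this

lemma lim1 (κ : ℂ) (hκ : 0 < κ.re) (ψ : E3 → ℂ) (hψ : Continuous ψ) (C : ℝ)
    (hC : ∀ z, ‖ψ z‖ ≤ C) :
    Tendsto (fun ε : ℝ => ∫ z : E3, Af κ (rho ε z) * ψ z) (𝓝[>] 0)
      (𝓝 (∫ z : E3, GK κ z * ψ z)) := by
  refine tendsto_integral_filter_of_dominated_convergence (fun z => ‖GK κ z‖ * C) ?_ ?_
    ((GK_integrable κ hκ).norm.mul_const C) ?_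
  · filter_upwards [self_mem_nhdsWithin] with ε hε
    exact ((A_cont κ ε hε).mul hψ).aestronglyMeasurable
  · refine Eventually.of_forall fun ε => ?_
    filter_upwards [ae_ne_zero] with z hz
    rw [norm_mul]
    gcongr
    · exact Af_norm_le κ hκ ε z hz
    · exact hC z
  · filter_upwards [ae_ne_zero] with z hz
    refine Tendsto.mul_const _ ?_
    have hz' : ‖z‖ ≠ 0 := norm_ne_zero_iff.mpr hz
    have h := (Af_deriv κ ‖z‖ hz').continuousAt.tendsto.comp (rho_tendsto z)
    have e : Af κ ‖z‖ = GK κ z := by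
      simp only [Af, EE, GK]
      rw [div_mul_div_comm, mul_one]
    rwa [e] at h

lemma rho_smul (ε : ℝ) (hε : 0 < ε) (w : E3) : rho ε (ε • w) = ε * rho 1 w := by
  unfold rho
  rw [norm_smul, Real.norm_of_nonneg hε.le]
  have : (ε * ‖w‖) ^ 2 + ε ^ 2 = ε ^ 2 * (‖w‖ ^ 2 + 1 ^ 2) := by ring
  rw [this, Real.sqrt_mul (by positivity), Real.sqrt_sq hε.le]

lemma scaled (κ : ℂ) (ε : ℝ) (hε : 0 < ε) (φ : E3 → ℂ) :
    ∫ z : E3, (ε : ℂ) ^ 2 * Cf κ (rho ε z) * φ z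
      = ∫ w : E3, EE κ (ε * rho 1 w) * (κ ^ 2 * (ε : ℂ) ^ 2 / (rho 1 w : ℂ) ^ 3
        + 3 * κ * (ε : ℂ) / (rho 1 w : ℂ) ^ 4 + 3 / (rho 1 w : ℂ) ^ 5) * φ (ε • w) := by
  have h := Measure.integral_comp_smul (volume : Measure E3)
    (fun z : E3 => (ε : ℂ) ^ 2 * Cf κ (rho ε z) * φ z) ε
  have he : (ε : ℂ) ≠ 0 := by exact_mod_cast hε.ne'
  simp only [finrank_euclideanSpace, Fintype.card_fin, rho_smul ε hε] at h
  rw [abs_of_pos (by positivity), Complex.real_smul, Complex.ofReal_inv, Complex.ofReal_pow,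
    eq_inv_mul_iff_mul_eq₀ (pow_ne_zero 3 he)] at h
  rw [← h, ← integral_const_mul]
  congr 1
  funext w
  have hc : (rho 1 w : ℂ) ≠ 0 := by exact_mod_cast (rho_pos 1 one_pos w).ne'
  unfold Cf
  push_cast
  field_simp

lemma sigma_integrable : Integrable fun w : E3 => 1 / rho 1 w ^ 4 := by
  have h := integrable_rpow_neg_one_add_norm_sq (E := E3) (μ := volume) (r := 4)
    (by simp; norm_num)
  refine h.congr (Eventually.of_forall fun w => ?_)
  have e : rho 1 w ^ 4 = (1 + ‖w‖ ^ 2) ^ 2 := by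
    have := rho_sq 1 w
    calc rho 1 w ^ 4 = (rho 1 w ^ 2) ^ 2 := by ring
      _ = _ := by rw [this]; ring
  simp only [e]
  rw [show (-4 / 2 : ℝ) = -(2 : ℕ) by norm_num, Real.rpow_neg (by positivity), Real.rpow_natCast,
    one_div]

lemma mass : ∫ w : E3, (3 / (4 * π)) / rho 1 w ^ 5 = (1 : ℝ) := by
  have h := integral_fun_norm_addHaar (volume : Measure E3)
    (fun r : ℝ => (3 / (4 * π)) / √(r ^ 2 + 1 ^ 2) ^ 5)
  unfold rho
  rw [h]
  have hv : (volume : Measure E3).real (Metric.ball 0 1) = 4 / 3 * π := by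
    rw [Measure.real, EuclideanSpace.volume_ball_fin_three]
    have hpi := Real.pi_pos.le
    simp
    rw [ENNReal.toReal_ofReal (by positivity)]
    ring
  have hI : ∫ y in Set.Ioi (0 : ℝ), y ^ 2 * (1 / √(y ^ 2 + 1) ^ 5) = 1 / 3 := by
    have hd : ∀ y ∈ Set.Ici (0 : ℝ), HasDerivAt (fun y : ℝ => (y / √(y ^ 2 + 1)) ^ 3 / 3)
        (y ^ 2 * (1 / √(y ^ 2 + 1) ^ 5)) y := by
      intro y _
      have hp : 0 < y ^ 2 + 1 := by positivity
      have h1 := ((hasDerivAt_pow 2 y).add_const 1).sqrt hp.ne'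
      have hs : 0 < √(y ^ 2 + 1) := Real.sqrt_pos.mpr hp
      have h2 := (((hasDerivAt_id y).fun_div h1 hs.ne').fun_pow 3).div_const 3
      refine h2.congr_deriv ?_
      have hs2 : √(y ^ 2 + 1) ^ 2 = y ^ 2 + 1 := Real.sq_sqrt hp.le
      generalize √(y ^ 2 + 1) = s at *
      simp only [id]
      push_cast
      norm_num
      field_simp
      rw [hs2]
      ring
    have ht : Tendsto (fun y : ℝ => (y / √(y ^ 2 + 1)) ^ 3 / 3) atTop (𝓝 (1 / 3)) := by
      have h1 : Tendsto (fun y : ℝ => √(1 / (1 + (y⁻¹) ^ 2))) atTop (𝓝 1) := by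
        have hc : ContinuousAt (fun t : ℝ => √(1 / (1 + t ^ 2))) 0 := by
          fun_prop (disch := norm_num)
        have := hc.tendsto.comp tendsto_inv_atTop_zero
        simpa [Function.comp_def] using this
      have h2 : Tendsto (fun y : ℝ => y / √(y ^ 2 + 1)) atTop (𝓝 1) := by
        refine h1.congr' ?_
        filter_upwards [eventually_gt_atTop 0] with y hy
        rw [show 1 / (1 + y⁻¹ ^ 2) = y ^ 2 / (y ^ 2 + 1) by field_simp,
          Real.sqrt_div (by positivity), Real.sqrt_sq hy.le]
      simpa using (h2.pow 3).div_const 3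
    have := integral_Ioi_of_hasDerivAt_of_nonneg' hd (fun y _ => by positivity) ht
    rw [this]
    simp
  have e : ∀ y : ℝ, y ^ (Module.finrank ℝ E3 - 1) • ((3 / (4 * π)) / √(y ^ 2 + 1 ^ 2) ^ 5)
      = (3 / (4 * π)) * (y ^ 2 * (1 / √(y ^ 2 + 1) ^ 5)) := by
    intro y
    simp only [finrank_euclideanSpace, Fintype.card_fin, smul_eq_mul, one_pow]
    ring
  simp_rw [e]
  rw [integral_const_mul, hI, hv]
  simp
  field_simp

lemma exp_bound (x : ℝ) (hx : 0 < x) : Real.exp (-x) ≤ 1 / x := by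
  rw [Real.exp_neg, ← one_div]
  have := Real.add_one_le_exp x
  gcongr
  linarith

lemma lim2 (κ : ℂ) (hκ : 0 < κ.re) (φ : E3 → ℂ) (hφ : Continuous φ) (C : ℝ)
    (hC : ∀ z, ‖φ z‖ ≤ C) :
    Tendsto (fun ε : ℝ => ∫ z : E3, (ε : ℂ) ^ 2 * Cf κ (rho ε z) * φ z) (𝓝[>] 0)
      (𝓝 (φ 0)) := by
  have hlim : φ 0 = ∫ w : E3, EE κ (0 * rho 1 w) * (κ ^ 2 * ((0 : ℝ) : ℂ) ^ 2 / (rho 1 w : ℂ) ^ 3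
        + 3 * κ * ((0 : ℝ) : ℂ) / (rho 1 w : ℂ) ^ 4 + 3 / (rho 1 w : ℂ) ^ 5)
          * φ ((0 : ℝ) • w) := by
    have e : ∀ w : E3, EE κ (0 * rho 1 w) * (κ ^ 2 * ((0 : ℝ) : ℂ) ^ 2 / (rho 1 w : ℂ) ^ 3
        + 3 * κ * ((0 : ℝ) : ℂ) / (rho 1 w : ℂ) ^ 4 + 3 / (rho 1 w : ℂ) ^ 5)
          * φ ((0 : ℝ) • w) = (((3 / (4 * π)) / rho 1 w ^ 5 : ℝ) : ℂ) * φ 0 := by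
      intro w
      simp only [EE, zero_smul]
      push_cast
      simp
      left
      ring
    simp_rw [e]
    rw [integral_mul_const, integral_complex_ofReal, mass]
    simp
  rw [hlim]
  have hev : ∀ᶠ ε : ℝ in 𝓝[>] 0, 0 < ε ∧ ε ≤ 1 := by
    filter_upwards [Ioc_mem_nhdsGT (zero_lt_one (α := ℝ))] with ε hε
    exact hε
  refine Tendsto.congr' (f₁ := fun ε : ℝ => ∫ w : E3, EE κ (ε * rho 1 w) *
    (κ ^ 2 * (ε : ℂ) ^ 2 / (rho 1 w : ℂ) ^ 3
        + 3 * κ * (ε : ℂ) / (rho 1 w : ℂ) ^ 4 + 3 / (rho 1 w : ℂ) ^ 5) * φ (ε • w)) ?_ ?_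
  · filter_upwards [hev] with ε hε
    exact (scaled κ ε hε.1 φ).symm
  have hne : ∀ w : E3, (rho 1 w : ℂ) ≠ 0 := fun w => by
    exact_mod_cast (rho_pos 1 one_pos w).ne'
  refine tendsto_integral_filter_of_dominated_convergence
    (fun w => (‖κ‖ ^ 2 / κ.re + 3 * ‖κ‖ + 3) * (1 / rho 1 w ^ 4) * C) ?_ ?_
    ((sigma_integrable.const_mul _).mul_const C) ?_
  · filter_upwards [hev] with ε hε
    refine Continuous.aestronglyMeasurable ?_
    have := rho_cont 1
    unfold EE
    fun_prop (disch := simpa using hne)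
  · filter_upwards [hev] with ε hε
    refine Eventually.of_forall fun w => ?_
    obtain ⟨h0, h1⟩ := hε
    have hs : 1 ≤ rho 1 w := rho_ge 1 one_pos w
    have hs0 : 0 < rho 1 w := rho_pos 1 one_pos w
    rw [norm_mul]
    refine mul_le_mul ?_ (hC _) (norm_nonneg _) (by positivity)
    have hE1 := EE_norm_le κ hκ (ε * rho 1 w) (by positivity)
    have hE2 : ‖EE κ (ε * rho 1 w)‖ ≤ 1 / (κ.re * (ε * rho 1 w)) := by
      rw [EE_norm]
      have hp : 1 ≤ 4 * π := by
        have := Real.pi_gt_three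
        linarith
      exact (div_le_self (Real.exp_pos _).le hp).trans (exp_bound _ (by positivity))
    rw [mul_add, mul_add]
    refine norm_add₃_le.trans ?_
    rw [add_mul, add_mul]
    refine add_le_add (add_le_add ?_ ?_) ?_
    · rw [norm_mul]
      simp only [norm_div, norm_mul, norm_pow, Complex.norm_real, Real.norm_of_nonneg hs0.le,
        Real.norm_of_nonneg h0.le]
      calc _ ≤ 1 / (κ.re * (ε * rho 1 w)) * (‖κ‖ ^ 2 * ε ^ 2 / rho 1 w ^ 3) := by gcongr
        _ = ‖κ‖ ^ 2 / κ.re * (1 / rho 1 w ^ 4) * ε := by field_simp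
        _ ≤ _ := mul_le_of_le_one_right (by positivity) h1
    · rw [norm_mul]
      simp only [norm_div, norm_mul, norm_pow, Complex.norm_real, Real.norm_of_nonneg hs0.le,
        Real.norm_of_nonneg h0.le, RCLike.norm_ofNat]
      calc _ ≤ 1 * (3 * ‖κ‖ * 1 / rho 1 w ^ 4) := by gcongr
        _ = _ := by ring
    · rw [norm_mul]
      simp only [norm_div, norm_pow, Complex.norm_real, Real.norm_of_nonneg hs0.le,
        RCLike.norm_ofNat]
      calc _ ≤ 1 * (3 / rho 1 w ^ 4) := by
            gcongr
            norm_num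
        _ = _ := by ring
  · refine Eventually.of_forall fun w => ?_
    have hc : Continuous fun ε : ℝ => EE κ (ε * rho 1 w) *
      (κ ^ 2 * (ε : ℂ) ^ 2 / (rho 1 w : ℂ) ^ 3
        + 3 * κ * (ε : ℂ) / (rho 1 w : ℂ) ^ 4 + 3 / (rho 1 w : ℂ) ^ 5) * φ (ε • w) := by
      unfold EE
      fun_prop
    exact (hc.tendsto 0).mono_left nhdsWithin_le_nhds

lemma key (κ : ℂ) (hκ : 0 < κ.re) (φ : SchwartzMap E3 ℂ) :
    ∫ w : E3, GK κ w * (κ ^ 2 * φ w -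
      ∑ i, (∂_{e3 i} (∂_{e3 i} φ : SchwartzMap E3 ℂ) : SchwartzMap E3 ℂ) w) = φ 0 := by
  have hb : ∀ g : SchwartzMap E3 ℂ, ∃ C, ∀ x, ‖g x‖ ≤ C := fun g =>
    ⟨_, fun x => by simpa using SchwartzMap.norm_le_seminorm ℝ g x⟩
  obtain ⟨C, hC⟩ := hb φ
  choose D hD using fun i => hb (∂_{e3 i} (∂_{e3 i} φ : SchwartzMap E3 ℂ) : SchwartzMap E3 ℂ)
  have h2 := lim2 κ hκ φ φ.continuous C hC
  have h1 := lim1 κ hκ (fun w => κ ^ 2 * φ w -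
      ∑ i, (∂_{e3 i} (∂_{e3 i} φ : SchwartzMap E3 ℂ) : SchwartzMap E3 ℂ) w)
      ((continuous_const.mul φ.continuous).sub
        (continuous_finsetSum _ fun i _ => SchwartzMap.continuous _))
      (‖κ ^ 2‖ * C + ∑ i, D i) (fun z => by
        refine (norm_sub_le _ _).trans (add_le_add ?_ ?_)
        · rw [norm_mul]
          gcongr
          exact hC z
        · exact norm_sum_le_of_le _ fun i _ => hD i z)
  refine tendsto_nhds_unique (h1.congr' ?_) h2
  filter_upwards [self_mem_nhdsWithin] with ε hε
  exact green_eps κ hκ ε hε φ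

theorem stmt12 (κ : ℂ) (hκ : 0 < κ.re) (f : SchwartzMap E3 ℂ) :
    (∀ x : E3, Integrable (fun y : E3 =>
        Complex.exp (-κ * (‖x - y‖ : ℝ)) / (4 * (π : ℂ) * (‖x - y‖ : ℝ)) * f y)) ∧
    ContDiff ℝ 2 (yukawa κ (⇑f)) ∧
    (∀ x : E3, -lapC (yukawa κ (⇑f)) x + κ ^ 2 * yukawa κ (⇑f) x = f x) := by
  refine ⟨fun x => ?_, ?_, fun x => ?_⟩
  · simp_rw [yukawa_integrand]
    exact (UU_integrable κ hκ f x).comp_sub_right x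
  · rw [yukawa_eq]
    exact_mod_cast UU_contDiff κ hκ 2 f
  · rw [yukawa_eq]
    have h1 : lapC (UU κ f) x =
        ∑ i, UU κ (∂_{e3 i} (∂_{e3 i} f : SchwartzMap E3 ℂ) : SchwartzMap E3 ℂ) x := by
      unfold lapC
      refine Finset.sum_congr rfl fun i _ => ?_
      have : (fun y => fderiv ℝ (UU κ f) y (e3 i)) = UU κ (∂_{e3 i} f : SchwartzMap E3 ℂ) := by
        funext y
        exact UU_fderiv κ hκ f y _
      rw [this]
      exact UU_fderiv κ hκ _ x _
    have htr : ∀ (g : SchwartzMap E3 ℂ) (v : E3),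
        (∂_{v} (g.compSubConstCLM ℝ (-x)) : SchwartzMap E3 ℂ)
          = (∂_{v} g : SchwartzMap E3 ℂ).compSubConstCLM ℝ (-x) := by
      intro g v
      ext y
      simp only [SchwartzMap.lineDerivOp_apply_eq_fderiv, SchwartzMap.compSubConstCLM_apply]
      have : (⇑(g.compSubConstCLM ℝ (-x))) = fun y => g (y - (-x)) := rfl
      rw [this, fderiv_comp_sub]
    have h2 := key κ hκ (f.compSubConstCLM ℝ (-x))
    simp only [htr, SchwartzMap.compSubConstCLM_apply, sub_neg_eq_add, zero_add] at h2
    rw [h1, ← h2]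
    unfold UU
    simp only [smul_eq_mul, add_comm x]
    rw [← integral_finsetSum, ← integral_const_mul, ← integral_neg, ← integral_add]
    · congr 1
      funext w
      rw [← Finset.mul_sum]
      ring
    · refine (integrable_finsetSum _ fun i _ => ?_).neg
      simpa [add_comm x] using UU_integrable κ hκ (∂_{e3 i} (∂_{e3 i} f : SchwartzMap E3 ℂ) : SchwartzMap E3 ℂ) x
    · simpa [add_comm x] using (UU_integrable κ hκ f x).const_mul (κ ^ 2)
    · intro i _
      simpa [add_comm x] using UU_integrable κ hκ (∂_{e3 i} (∂_{e3 i} f : SchwartzMap E3 ℂ) : SchwartzMap E3 ℂ) x
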